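/- Let n ≥ 7 with n ≡ 1 (mod 3). For a generic choice of linear subspaces L, M ⊂ ℂ^{n+1} of dimensions n−3 and n−2 respectively (codimensions 4 and 3), of n−3 points l₁,…,l_{n−3} ∈ L, of (4n−10)/3 points m₁,…,m_{(4n−10)/3} ∈ M, and of four points p₁,p₂,p₃,p₄ ∈ ℂ^{n+1}, the only homogeneous cubic polynomial in ℂ[x₀,…,xₙ] that vanishes at every point of L ∪ M and is singular at all the points lᵢ, mᵢ, p₁, p₂, p₃, p₄ is the zero polynomial. -/

import Mathlib

/-!
The conditions imposed on a cubic are linear, with coefficients polynomial in the parameters, and the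
set of parameters for which they have no nonzero solution is Zariski open (`Generic.of_witness`).
Hence it suffices to exhibit one configuration on which only the zero cubic survives.

Write `n = 7 + 3a` and use coordinates `(x, y, z)` with `L = {x = 0}`, `M = {y = 0}`, so that there
are `4` coordinates `x`, `3` coordinates `y` and `1 + 3a` coordinates `z`. A cubic is the same as
its symmetric tensor of third derivatives (`tensor`), and being singular at `v` means that the
tensor contracted twice with `v` vanishes (`tensor_sum`). Vanishing on `L` and `M` leaves only the
components of types `xyy`, `xxy` and `xyz` (`tensor_eq_zero_of_vanish`, `contractions`).

The four general points, four of the points of `L` and six of the points of `M` are taken with all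
`z`-coordinates after the first equal to zero. They kill the components `xyy`, `xxy` and the part of
`xyz` with the first `z`-coordinate: this is the case `n = 7` (`base_conditions`). The other
`z`-coordinates come in `a` blocks of three, and to each block belong three points of `L` and four
of `M` whose remaining `z`-coordinates vanish. Once the components `xyy` and `xxy` are known to be
zero, these seven points and the four general ones impose 36 independent conditions on the
`4 · 3 · 3 = 36` components of type `xyz` of the block (`block_linear`). The blocks play the role of
an induction from `n` to `n + 3`.
-/

open MvPolynomial

noncomputable section

/-- The linear form `a₀x₀ + ⋯ + aₙxₙ` with coefficient vector `a`. -/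
def linForm {n : ℕ} (a : Fin (n + 1) → ℂ) : MvPolynomial (Fin (n + 1)) ℂ :=
  ∑ i, C (a i) * X i

/-- Evaluation at the point `v`, as a linear map. -/
def evalAt {n : ℕ} (v : Fin (n + 1) → ℂ) : MvPolynomial (Fin (n + 1)) ℂ →ₗ[ℂ] ℂ :=
  (aeval v).toLinearMap

/-- The linear map `f ↦ (∂f/∂xᵢ)(p)`. -/
def evalPDeriv {n : ℕ} (p : Fin (n + 1) → ℂ) (i : Fin (n + 1)) :
    MvPolynomial (Fin (n + 1)) ℂ →ₗ[ℂ] ℂ :=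
  evalAt p ∘ₗ (pderiv i).toLinearMap

/-- `f` is singular at `p`: all partial derivatives of `f` vanish at `p`. -/
def SingularAt {n : ℕ} (f : MvPolynomial (Fin (n + 1)) ℂ) (p : Fin (n + 1) → ℂ) : Prop :=
  ∀ i, evalPDeriv p i f = 0

/-- The space of homogeneous degree-`d` polynomials in `n+1` variables that vanish at every
point of `V` and are singular at every point of `S`. -/
def SingSpace (n : ℕ) (d : ℕ) (S V : Set (Fin (n + 1) → ℂ)) :
    Submodule ℂ (MvPolynomial (Fin (n + 1)) ℂ) :=
  homogeneousSubmodule (Fin (n + 1)) ℂ d ⊓ (⨅ v ∈ V, LinearMap.ker (evalAt v)) ⊓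
    ⨅ p ∈ S, ⨅ i, LinearMap.ker (evalPDeriv p i)

/-- A property of parameters `t : ι → ℂ` holds for a generic choice of `t` if there is a
nonzero polynomial `F` in the variables `ι` such that the property holds whenever
`F(t) ≠ 0`. -/
def Generic {ι : Type} [Fintype ι] (P : (ι → ℂ) → Prop) : Prop :=
  ∃ F : MvPolynomial ι ℂ, F ≠ 0 ∧ ∀ t : ι → ℂ, eval t F ≠ 0 → P t

end

/-! ### Generic conditions -/

/-- Nondegeneracy of a polynomially varying family of linear conditions on a finite-dimensional
space is an open condition: if the conditions cut out `0` at one parameter value, then they cut out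
`0` generically. The polynomial is the determinant of `x ↦ ∑ⱼ aₖⱼ Φⱼ(t)(x)`, where the scalars `aₖⱼ`
express the coordinate forms of a basis through the `Φⱼ(t₀)`. -/
lemma Generic.of_witness {ι : Type} [Fintype ι] {J V : Type*} [AddCommGroup V] [Module ℂ V]
    [FiniteDimensional ℂ V] (Φ : J → (ι → ℂ) → V →ₗ[ℂ] ℂ)
    (hΦ : ∀ j x, ∃ F : MvPolynomial ι ℂ, ∀ t, eval t F = Φ j t x) (t₀ : ι → ℂ)
    (h₀ : ∀ x, (∀ j, Φ j t₀ x = 0) → x = 0) :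
    Generic fun t => ∀ x, (∀ j, Φ j t x = 0) → x = 0 := by
  classical
  have hspan : Submodule.span ℂ (Set.range fun j => Φ j t₀) = ⊤ := by
    rw [← Subspace.dualCoannihilator_dualAnnihilator_eq
      (W := Submodule.span ℂ (Set.range fun j => Φ j t₀))]
    have : (Submodule.span ℂ (Set.range fun j => Φ j t₀)).dualCoannihilator = ⊥ := by
      rw [eq_bot_iff]
      intro x hx
      rw [Submodule.mem_dualCoannihilator] at hx
      exact h₀ x fun j => hx _ (Submodule.subset_span ⟨j, rfl⟩)
    rw [this, Submodule.dualAnnihilator_bot]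
  let B := Module.finBasis ℂ V
  have hcoord : ∀ k, ∃ a : J →₀ ℂ, (a.sum fun j r => r • Φ j t₀) = B.coord k := fun k =>
    Finsupp.mem_span_range_iff_exists_finsupp.1 (hspan ▸ Submodule.mem_top)
  choose a ha using hcoord
  choose F hF using hΦ
  let P : Matrix (Fin (Module.finrank ℂ V)) (Fin (Module.finrank ℂ V)) (MvPolynomial ι ℂ) :=
    Matrix.of fun k k' => (a k).sum fun j r => C r * F j (B k')
  have hP : ∀ t k k', eval t (P k k') = (a k).sum fun j r => r * Φ j t (B k') := by
    intro t k k'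
    simp [P, Finsupp.sum, hF]
  have hdet : ∀ t, eval t P.det = (P.map (eval t)).det := fun t => RingHom.map_det _ _
  refine ⟨P.det, ?_, ?_⟩
  · intro h
    have h1 : P.map (eval t₀) = 1 := by
      ext k k'
      have := congrArg (fun φ => φ (B k')) (ha k)
      simp only [Finsupp.sum, LinearMap.sum_apply, LinearMap.smul_apply, smul_eq_mul,
        Module.Basis.coord_apply, Module.Basis.repr_self] at this
      rw [Matrix.map_apply, hP, Finsupp.sum, this, Matrix.one_apply, Finsupp.single_apply]
      simp [eq_comm]
    have := hdet t₀
    rw [h, h1] at this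
    simp at this
  · intro t ht x hx
    rw [hdet] at ht
    have hmul : (P.map (eval t)).mulVec (B.repr x) = 0 := by
      ext k
      have hx' : ∀ j, ∑ k', Φ j t (B k') * B.repr x k' = 0 := by
        intro j
        rw [← hx j]
        conv_rhs => rw [← B.sum_repr x, map_sum]
        simp only [map_smul, smul_eq_mul, mul_comm]
      simp only [Matrix.mulVec, dotProduct, Matrix.map_apply, hP, Finsupp.sum, Finset.sum_mul,
        Pi.zero_apply]
      rw [Finset.sum_comm]
      refine Finset.sum_eq_zero fun j _ => ?_
      rw [← mul_zero (a k j), ← hx' j, Finset.mul_sum]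
      simp [mul_assoc]
    have := Matrix.eq_zero_of_mulVec_eq_zero ht hmul
    apply B.repr.map_eq_zero_iff.1
    ext k
    exact congrFun this k

lemma Generic.and {ι : Type} [Fintype ι] {P Q : (ι → ℂ) → Prop} (hP : Generic P)
    (hQ : Generic Q) : Generic fun t => P t ∧ Q t := by
  obtain ⟨F, hF, hF'⟩ := hP
  obtain ⟨G, hG, hG'⟩ := hQ
  refine ⟨F * G, mul_ne_zero hF hG, fun t ht => ?_⟩
  rw [map_mul] at ht
  exact ⟨hF' t (left_ne_zero_of_mul ht), hG' t (right_ne_zero_of_mul ht)⟩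

lemma Generic.mono {ι : Type} [Fintype ι] {P Q : (ι → ℂ) → Prop} (hP : Generic P)
    (h : ∀ t, P t → Q t) : Generic Q := by
  obtain ⟨F, hF, hF'⟩ := hP
  exact ⟨F, hF, fun t ht => h t (hF' t ht)⟩

lemma generic_mulVec_injective {ι : Type} [Fintype ι] {r s : ℕ} (g : Fin r → Fin s → ι)
    (t₀ : ι → ℂ) (h₀ : Function.Injective (Matrix.of fun i j => t₀ (g i j)).mulVec) :
    Generic fun t => Function.Injective (Matrix.of fun i j => t (g i j)).mulVec := by
  refine (Generic.of_witness (J := Fin r) (V := Fin s → ℂ) (fun i t =>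
    LinearMap.proj i ∘ₗ (Matrix.of fun i j => t (g i j)).mulVecLin) ?_ t₀ ?_).mono ?_
  · intro i x
    refine ⟨∑ j, X (g i j) * C (x j), fun t => ?_⟩
    simp [Matrix.mulVec, dotProduct]
  · intro x hx
    apply h₀
    ext i
    simpa using hx i
  · intro t ht x y hxy
    rw [← sub_eq_zero]
    apply ht
    intro i
    simp [Matrix.mulVec_sub, hxy]

lemma mem_singSpace {n d : ℕ} {S V : Set (Fin (n + 1) → ℂ)} {f : MvPolynomial (Fin (n + 1)) ℂ} :
    f ∈ SingSpace n d S V ↔ f.IsHomogeneous d ∧ (∀ v ∈ V, eval v f = 0) ∧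
      ∀ p ∈ S, ∀ i, eval p (pderiv i f) = 0 := by
  simp [SingSpace, evalAt, evalPDeriv, and_assoc, aeval_eq_eval]

/-- For points depending polynomially on parameters, it suffices to exhibit one parameter value at
which `SingSpace` vanishes. -/
lemma generic_singSpace {ι : Type} [Fintype ι] {A B : Type*} {n d : ℕ}
    (S : A → Fin (n + 1) → MvPolynomial ι ℂ) (V : B → Fin (n + 1) → MvPolynomial ι ℂ) (t₀ : ι → ℂ)
    (h₀ : ∀ f ∈ SingSpace n d (Set.range fun a i => eval t₀ (S a i))
      (Set.range fun b i => eval t₀ (V b i)), f = 0) :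
    Generic fun t => ∀ f ∈ SingSpace n d (Set.range fun a i => eval t (S a i))
      (Set.range fun b i => eval t (V b i)), f = 0 := by
  have hfin : FiniteDimensional ℂ (homogeneousSubmodule (Fin (n + 1)) ℂ d) :=
    Submodule.finiteDimensional_of_le (S₂ := restrictTotalDegree (Fin (n + 1)) ℂ d) fun f hf =>
      (mem_restrictTotalDegree _ _ _).2 (IsHomogeneous.totalDegree_le hf)
  have hbind : ∀ (q : Fin (n + 1) → MvPolynomial ι ℂ) (f : MvPolynomial (Fin (n + 1)) ℂ) t,
      eval t (bind₁ q f) = eval (fun i => eval t (q i)) f := fun q f t => by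
    rw [← aeval_eq_eval, ← aeval_eq_eval, aeval_bind₁]
  refine (Generic.of_witness (J := (A × Fin (n + 1)) ⊕ B)
    (V := homogeneousSubmodule (Fin (n + 1)) ℂ d) (fun j t => Sum.elim
      (fun a => evalPDeriv (fun i => eval t (S a.1 i)) a.2)
      (fun b => evalAt fun i => eval t (V b i)) j ∘ₗ Submodule.subtype _) ?_ t₀ ?_).mono ?_
  · rintro (⟨a, i⟩ | b) f
    · exact ⟨bind₁ (S a) (pderiv i f.1), fun t => by
        simp [hbind, evalPDeriv, evalAt, aeval_eq_eval]⟩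
    · exact ⟨bind₁ (V b) f.1, fun t => by simp [hbind, evalAt, aeval_eq_eval]⟩
  · rintro ⟨f, hf⟩ h
    refine Subtype.ext (h₀ f (mem_singSpace.2 ⟨hf, ?_, ?_⟩))
    · rintro _ ⟨b, rfl⟩
      simpa [evalAt, aeval_eq_eval] using h (Sum.inr b)
    · rintro _ ⟨a, rfl⟩ i
      simpa [evalPDeriv, evalAt, aeval_eq_eval] using h (Sum.inl (a, i))
  · intro t ht f hf
    rw [mem_singSpace] at hf
    obtain ⟨hd, hV, hS⟩ := hf
    refine congrArg Subtype.val (ht ⟨f, hd⟩ ?_)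
    rintro (⟨a, i⟩ | b)
    · simpa [evalPDeriv, evalAt, aeval_eq_eval] using hS _ ⟨a, rfl⟩ i
    · simpa [evalAt, aeval_eq_eval] using hV _ ⟨b, rfl⟩

/-! ### Cubics as symmetric tensors -/

lemma pderiv_comm' {σ : Type*} (i j : σ) (f : MvPolynomial σ ℂ) :
    pderiv i (pderiv j f) = pderiv j (pderiv i f) := by
  classical
  have : ⁅(pderiv i : Derivation ℂ (MvPolynomial σ ℂ) (MvPolynomial σ ℂ)),
      (pderiv j : Derivation ℂ (MvPolynomial σ ℂ) (MvPolynomial σ ℂ))⁆ = 0 := by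
    refine derivation_ext fun k => ?_
    rw [Derivation.commutator_apply, pderiv_X, pderiv_X]
    simp [Pi.single_apply, apply_ite]
  rw [← sub_eq_zero, ← Derivation.commutator_apply, this, Derivation.zero_apply]

lemma euler_eval {σ : Type*} [Fintype σ] {f : MvPolynomial σ ℂ} {d : ℕ} (hf : f.IsHomogeneous d)
    (v : σ → ℂ) : ∑ i, v i * eval v (pderiv i f) = d * eval v f := by
  simpa using congrArg (eval v) hf.sum_X_mul_pderiv

/-- The third partial derivatives of a cubic form: the symmetric tensor corresponding to it. -/
noncomputable def tensor {σ : Type*} (f : MvPolynomial σ ℂ) (i j k : σ) : ℂ :=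
  eval 0 (pderiv k (pderiv j (pderiv i f)))

lemma tensor_swap_left {σ : Type*} (f : MvPolynomial σ ℂ) (i j k : σ) :
    tensor f i j k = tensor f j i k := by
  rw [tensor, tensor, pderiv_comm' j i]

lemma tensor_swap_right {σ : Type*} (f : MvPolynomial σ ℂ) (i j k : σ) :
    tensor f i j k = tensor f i k j := by
  rw [tensor, tensor, pderiv_comm' k j]

lemma tensor_sum {σ : Type*} [Fintype σ] {f : MvPolynomial σ ℂ} (hf : f.IsHomogeneous 3)
    (v : σ → ℂ) (i : σ) :
    ∑ j, ∑ k, tensor f i j k * v j * v k = 2 * eval v (pderiv i f) := by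
  have h1 : (pderiv i f).IsHomogeneous 2 := hf.pderiv
  have h := euler_eval h1 v
  rw [Nat.cast_ofNat] at h
  rw [← h]
  refine Finset.sum_congr rfl fun j _ => ?_
  have h2 : (pderiv j (pderiv i f)).IsHomogeneous 1 := h1.pderiv
  have h' := euler_eval h2 v
  rw [Nat.cast_one, one_mul] at h'
  rw [← h', Finset.mul_sum]
  refine Finset.sum_congr rfl fun k _ => ?_
  -- a third derivative is constant, so it may be evaluated at `0` instead of `v`
  have h3 : (pderiv k (pderiv j (pderiv i f))).IsHomogeneous 0 := h2.pderiv
  obtain ⟨r, hr⟩ : ∃ r, pderiv k (pderiv j (pderiv i f)) = C r :=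
    ⟨_, (totalDegree_eq_zero_iff_eq_C).1 ((totalDegree_zero_iff_isHomogeneous σ).2 h3)⟩
  rw [tensor, hr, eval_C, eval_C]
  ring

lemma eq_zero_of_tensor {σ : Type*} [Fintype σ] {f : MvPolynomial σ ℂ} (hf : f.IsHomogeneous 3)
    (h : ∀ i j k, tensor f i j k = 0) : f = 0 := by
  refine MvPolynomial.funext fun v => ?_
  have h1 := euler_eval hf v
  have h2 : ∀ i, eval v (pderiv i f) = 0 := fun i => by simpa [h] using tensor_sum hf v i
  simpa [h2] using h1

/-- If `f` vanishes on the coordinate subspace where the coordinates in `s` are zero, then so do its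
partial derivatives along that subspace. -/
lemma eval_pderiv_of_vanish {σ : Type*} [Finite σ] {s : Set σ} {f : MvPolynomial σ ℂ}
    (h : ∀ v : σ → ℂ, (∀ j ∈ s, v j = 0) → eval v f = 0) {i : σ} (hi : i ∉ s) :
    ∀ v : σ → ℂ, (∀ j ∈ s, v j = 0) → eval v (pderiv i f) = 0 := by
  classical
  let φ : MvPolynomial σ ℂ →ₐ[ℂ] MvPolynomial σ ℂ := aeval fun j => if j ∈ s then 0 else X j
  have hφ : ∀ (v : σ → ℂ) g, eval v (φ g) = eval (fun j => if j ∈ s then 0 else v j) g := by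
    intro v g
    simp only [φ, ← aeval_eq_eval]
    rw [← AlgHom.comp_apply]
    congr 1
    ext j
    by_cases hj : j ∈ s <;> simp [hj]
  have hf : φ f = 0 := MvPolynomial.funext fun v => by
    rw [hφ, map_zero]
    exact h _ fun j hj => by simp [hj]
  have hcomm : ∀ g, pderiv i (φ g) = φ (pderiv i g) := by
    intro g
    induction g using MvPolynomial.induction_on with
    | C r => simp
    | add p q hp hq => simp [hp, hq]
    | mul_X p j hp =>
      have hX : pderiv i (φ (X j)) = φ (pderiv i (X j)) := by
        by_cases hj : j ∈ s
        · have : i ≠ j := fun e => hi (e ▸ hj)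
          simp [φ, hj, pderiv_X_of_ne this.symm]
        · by_cases e : j = i
          · subst e
            simp [φ, hj]
          · simp [φ, hj, pderiv_X_of_ne e]
      rw [map_mul, Derivation.leibniz, Derivation.leibniz, hp, hX]
      simp
  intro v hv
  have := hφ v (pderiv i f)
  rw [← hcomm, hf, map_zero, map_zero] at this
  rw [this]
  congr 2
  ext j
  split_ifs with hj
  · exact hv j hj
  · rfl

lemma tensor_eq_zero_of_vanish {σ : Type*} [Finite σ] {s : Set σ} {f : MvPolynomial σ ℂ}
    (h : ∀ v : σ → ℂ, (∀ j ∈ s, v j = 0) → eval v f = 0) {i j k : σ} (hi : i ∉ s) (hj : j ∉ s)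
    (hk : k ∉ s) : tensor f i j k = 0 :=
  eval_pderiv_of_vanish (eval_pderiv_of_vanish (eval_pderiv_of_vanish h hi) hj) hk 0 fun _ _ => rfl

/-! ### The explicit configuration and its linear systems -/

/-- The `x`-coordinates of the four general points. -/
def xP : Fin 4 → Fin 4 → ℂ := fun s => Pi.single s 1

/-- The `y`-coordinates of the four general points; their `z`-coordinates are zero. -/
def yP : Fin 4 → Fin 3 → ℂ := ![![1, 0, 0], ![0, 1, 0], ![0, 0, 1], ![1, 1, 1]]

/-- The `y`-coordinates of the four base points of `L`, those belonging to no block. -/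
def yL : Fin 4 → Fin 3 → ℂ := ![![0, 1, 1], ![1, 0, 1], ![0, 1, -1], ![1, 0, -1]]

/-- The first `z`-coordinate of the four base points of `L`; the others are zero. -/
def zL : Fin 4 → ℂ := ![1, -1, 1, 1]

/-- The `x`-coordinates of the six base points of `M`, those belonging to no block; their other
coordinates are zero. -/
def xM : Fin 6 → Fin 4 → ℂ :=
  ![![1, 1, 0, 0], ![1, 0, 1, 0], ![1, 0, 0, 1], ![0, 1, 1, 0], ![0, 1, 0, 1], ![0, 0, 1, 1]]

/-- The `y`-coordinates of the three points of `L` belonging to a block. -/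
def yN : Fin 3 → Fin 3 → ℂ := ![![1, 1, 0], ![0, 1, 1], ![0, 1, 1]]

/-- The block coordinates of the three points of `L` belonging to a block. -/
def wL : Fin 3 → Fin 3 → ℂ := ![![1, 0, 0], ![0, 1, 1], ![1, 0, 0]]

/-- The `x`-coordinates of the four points of `M` belonging to a block. -/
def xN : Fin 4 → Fin 4 → ℂ := ![![1, 0, 1, 0], ![0, 0, 1, 1], ![-1, 1, 0, 0], ![0, 1, 0, 1]]

/-- The block coordinates of the four points of `M` belonging to a block. -/
def wM : Fin 4 → Fin 3 → ℂ := ![![0, 0, 1], ![0, 1, 0], ![0, 1, 0], ![0, 0, 1]]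

/-- The first case of the induction, `n = 7`, written out: `c`, `d`, `e` are the `xyy`, `xxy`, `xyz`
components of a cubic, and the hypotheses express its singularity at the four general points
(`hpx`, `hpy`, `hpz`, with primes for the fourth point), at four points of `L` (`hl0`, …, `hl3`)
and at six points of `M` (`hm`). The system is solved by elimination: `hl0`, …, `hl3` express `e`
through `c`, `hm` expresses the off-diagonal part of `d` through its diagonal, and the rest is solved
for one slice `c i` at a time. -/
lemma base_linear (c : Fin 4 → Fin 3 → Fin 3 → ℂ) (d : Fin 4 → Fin 4 → Fin 3 → ℂ)
    (e : Fin 4 → Fin 3 → ℂ) (hc : ∀ i j k, c i j k = c i k j) (hd : ∀ i i' j, d i i' j = d i' i j)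
    (hm : ∀ i i' j, i < i' → d i i j + 2 * d i i' j + d i' i' j = 0)
    (hpx : ∀ i (s : Fin 3), c i s s + 2 * d i s.castSucc s = 0)
    (hpx' : ∀ i, c i 0 0 + c i 1 1 + c i 2 2 + 2 * (c i 0 1 + c i 0 2 + c i 1 2)
      + 2 * (d i 3 0 + d i 3 1 + d i 3 2) = 0)
    (hpy : ∀ (s j : Fin 3), d s.castSucc s.castSucc j + 2 * c s.castSucc s j = 0)
    (hpy' : ∀ j, d 3 3 j + 2 * (c 3 j 0 + c 3 j 1 + c 3 j 2) = 0)
    (hpz : ∀ s : Fin 3, e s.castSucc s = 0) (hpz' : e 3 0 + e 3 1 + e 3 2 = 0)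
    (hl0 : ∀ i, c i 1 1 + 2 * c i 1 2 + c i 2 2 + 2 * (e i 1 + e i 2) = 0)
    (hl1 : ∀ i, c i 0 0 + 2 * c i 0 2 + c i 2 2 - 2 * (e i 0 + e i 2) = 0)
    (hl2 : ∀ i, c i 1 1 - 2 * c i 1 2 + c i 2 2 + 2 * (e i 1 - e i 2) = 0)
    (hl3 : ∀ i, c i 0 0 - 2 * c i 0 2 + c i 2 2 + 2 * (e i 0 - e i 2) = 0) :
    (∀ i j k, c i j k = 0) ∧ (∀ i i' j, d i i' j = 0) ∧ (∀ i j, e i j = 0) := by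
  have e0 : ∀ i, e i 0 = c i 0 2 := fun i => by linear_combination (hl3 i - hl1 i) / 4
  have e1 : ∀ i, e i 1 = -(c i 1 1 + c i 2 2) / 2 := fun i => by
    linear_combination (hl0 i + hl2 i) / 4
  have e2 : ∀ i, e i 2 = - c i 1 2 := fun i => by linear_combination (hl0 i - hl2 i) / 4
  have key : ∀ i, c i 0 0 + c i 2 2 + 2 * c i 1 2 = 0 := fun i => by
    linear_combination (hl1 i + hl3 i) / 2 + 2 * e2 i
  have css : ∀ s : Fin 3, c s.castSucc s s = 0 := fun s => by
    linear_combination (2 * hpy s s - hpx s.castSucc s) / 3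
  have dss : ∀ s : Fin 3, d s.castSucc s.castSucc s = 0 := fun s => by
    linear_combination hpy s s - 2 * css s
  -- off the diagonal, `hm` turns `hpx` into `c i s s = d i i s`
  have cD : ∀ i (s : Fin 3), i ≠ s.castSucc → c i s s = d i i s := fun i s h => by
    rcases lt_or_gt_of_ne h with h | h
    · linear_combination hpx i s - hm i _ s h + dss s
    · linear_combination hpx i s - hm _ i s h + dss s - 2 * hd i s.castSucc s
  have c000 := css 0
  have c111 := css 1
  have c222 := css 2
  have E0 := hpz 0
  have E1 := hpz 1
  have E2 := hpz 2
  have D01 := hpy 0 1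
  have D02 := hpy 0 2
  have D10 := hpy 1 0
  have D12 := hpy 1 2
  have D20 := hpy 2 0
  have D21 := hpy 2 1
  have C01 := cD 0 1 (by decide)
  have C02 := cD 0 2 (by decide)
  have C10 := cD 1 0 (by decide)
  have C12 := cD 1 2 (by decide)
  have C20 := cD 2 0 (by decide)
  have C21 := cD 2 1 (by decide)
  have C30 := cD 3 0 (by decide)
  have C31 := cD 3 1 (by decide)
  have C32 := cD 3 2 (by decide)
  have d00 := dss 0
  have d11 := dss 1
  have d22 := dss 2
  simp only [Fin.castSucc_zero, Fin.reduceCastSucc] at c000 c111 c222 E0 E1 E2 D01 D02 D10 D12 D20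
  simp only [Fin.reduceCastSucc] at D21 C01 C02 C10 C12 C20 C21 C30 C31 C32
  simp only [Fin.castSucc_zero, Fin.reduceCastSucc] at d00 d11 d22
  rw [e0] at E0
  rw [e1] at E1
  rw [e2] at E2
  rw [e0, e1, e2] at hpz'
  have s01 := hc 1 0 1
  have s02 := hc 2 0 2
  have s12 := hc 2 1 2
  -- the fourth point makes `d 3 3` vanish on `(1, 1, 1)`
  have tr : d 3 3 0 + d 3 3 1 + d 3 3 2 = 0 := by
    linear_combination (2 * hpx' 3 - hpy' 0 - hpy' 1 - hpy' 2
      + 2 * (hc 3 1 0 + hc 3 2 0 + hc 3 2 1)) / 3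
  -- the slices `c 0`, …, `c 3` now vanish one after the other
  have z0 : c 0 0 1 = 0 ∧ c 0 0 2 = 0 ∧ c 0 1 1 = 0 ∧ c 0 1 2 = 0 ∧ c 0 2 2 = 0 := by
    have h22 : c 0 2 2 = 0 := by linear_combination C02 + D02 - 2 * E0
    have h12 : c 0 1 2 = 0 := by linear_combination (key 0 - c000 - h22) / 2
    have hD : d 0 0 1 = 0 := by
      linear_combination (hm 0 3 0 (by decide) + hm 0 3 1 (by decide) + hm 0 3 2 (by decide)) - tr
        - d00 - (D02 - 2 * E0) - hpx' 0 + c000 + C01 + h22 + D01 + 2 * E0 + 2 * h12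
    exact ⟨by linear_combination (D01 - hD) / 2, E0, by linear_combination C01 + hD, h12, h22⟩
  have z1 : c 1 0 0 = 0 ∧ c 1 0 1 = 0 ∧ c 1 0 2 = 0 ∧ c 1 1 2 = 0 ∧ c 1 2 2 = 0 := by
    have h22 : c 1 2 2 = 0 := by linear_combination - 2 * E1 - c111
    have h12 : c 1 1 2 = 0 := by linear_combination (D12 + C12 - h22) / 2
    have h00 : c 1 0 0 = 0 := by linear_combination key 1 - h22 - 2 * h12
    have h01 : c 1 0 1 = 0 := by linear_combination s01 + (D10 + C10 - h00) / 2
    have hD : d 1 3 0 + d 1 3 1 + d 1 3 2 = 0 := by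
      linear_combination (hm 1 3 0 (by decide) + hm 1 3 1 (by decide) + hm 1 3 2 (by decide)
        - tr - d11 + C10 + C12 - h00 - h22) / 2
    exact ⟨h00, h01, by linear_combination (hpx' 1 - 2 * hD - h00 - h22 - c111) / 2 - h12 - h01,
      h12, h22⟩
  have z2 : c 2 0 0 = 0 ∧ c 2 0 1 = 0 ∧ c 2 0 2 = 0 ∧ c 2 1 1 = 0 ∧ c 2 1 2 = 0 := by
    have h12 : c 2 1 2 = 0 := by linear_combination - E2
    have h11 : c 2 1 1 = 0 := by linear_combination C21 + D21 - 2 * h12 + 2 * s12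
    have h00 : c 2 0 0 = 0 := by linear_combination key 2 - c222 - 2 * h12
    have h02 : c 2 0 2 = 0 := by linear_combination s02 + (D20 + C20 - h00) / 2
    have hD : d 2 3 0 + d 2 3 1 + d 2 3 2 = 0 := by
      linear_combination (hm 2 3 0 (by decide) + hm 2 3 1 (by decide) + hm 2 3 2 (by decide)
        - tr - d22 + C20 + C21 - h00 - h11) / 2
    exact ⟨h00, by linear_combination (hpx' 2 - 2 * hD - h00 - h11 - c222) / 2 - h12 - h02, h02,
      h11, h12⟩
  have z3 : c 3 0 0 = 0 ∧ c 3 0 1 = 0 ∧ c 3 0 2 = 0 ∧ c 3 1 1 = 0 ∧ c 3 1 2 = 0 ∧ c 3 2 2 = 0 := by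
    have a0 := hpy' 0
    have a1 := hpy' 1
    have a2 := hpy' 2
    have k := key 3
    rw [hc 3 1 0] at a1
    rw [hc 3 2 0, hc 3 2 1] at a2
    rw [← C30] at a0 tr
    rw [← C31] at a1 tr
    rw [← C32] at a2 tr
    refine ⟨?_, ?_, ?_, ?_, ?_, ?_⟩ <;> grind
  have row : ∀ i, c i 0 0 = 0 ∧ c i 0 1 = 0 ∧ c i 0 2 = 0 ∧ c i 1 1 = 0 ∧ c i 1 2 = 0 ∧
      c i 2 2 = 0 := by
    intro i
    fin_cases i
    · exact ⟨c000, z0⟩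
    · exact ⟨z1.1, z1.2.1, z1.2.2.1, c111, z1.2.2.2⟩
    · exact ⟨z2.1, z2.2.1, z2.2.2.1, z2.2.2.2.1, z2.2.2.2.2, c222⟩
    · exact z3
  have hc0 : ∀ i j k, c i j k = 0 := by
    intro i j k
    obtain ⟨h00, h01, h02, h11, h12, h22⟩ := row i
    fin_cases j <;> fin_cases k <;>
      simp [h00, h01, h02, h11, h12, h22, hc i 1 0, hc i 2 0, hc i 2 1]
  have hD0 : ∀ i j, d i i j = 0 := by
    intro i j
    refine Fin.lastCases ?_ (fun s => ?_) i
    · simpa [hc0] using hpy' j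
    · simpa [hc0] using hpy s j
  refine ⟨hc0, fun i i' j => ?_, ?_⟩
  · rcases lt_trichotomy i i' with h | rfl | h
    · linear_combination (hm i i' j h - hD0 i j - hD0 i' j) / 2
    · exact hD0 i j
    · linear_combination (hm i' i j h - hD0 i j - hD0 i' j) / 2 + hd i i' j
  · intro i j
    fin_cases j <;> simp [e0, e1, e2, hc0]

/-- The linear system of `base_linear`, with the conditions written as contractions with the points
of the explicit configuration. -/
lemma base_conditions (c : Fin 4 → Fin 3 → Fin 3 → ℂ) (d : Fin 4 → Fin 4 → Fin 3 → ℂ)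
    (e : Fin 4 → Fin 3 → ℂ) (hc : ∀ i j k, c i j k = c i k j) (hd : ∀ i i' j, d i i' j = d i' i j)
    (hpx : ∀ s i, ∑ j, ∑ k, c i j k * yP s j * yP s k
      + 2 * ∑ i', ∑ j, d i i' j * xP s i' * yP s j = 0)
    (hpy : ∀ s j, ∑ i, ∑ i', d i i' j * xP s i * xP s i'
      + 2 * ∑ i, ∑ k, c i j k * xP s i * yP s k = 0)
    (hpz : ∀ s, ∑ i, ∑ j, e i j * xP s i * yP s j = 0)
    (hl : ∀ s i, ∑ j, ∑ k, c i j k * yL s j * yL s k + 2 * ∑ j, e i j * yL s j * zL s = 0)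
    (hm : ∀ s j, ∑ i, ∑ i', d i i' j * xM s i * xM s i' = 0) :
    (∀ i j k, c i j k = 0) ∧ (∀ i i' j, d i i' j = 0) ∧ (∀ i j, e i j = 0) := by
  have hyP : ∀ s : Fin 3, yP s.castSucc = Pi.single s 1 := by
    intro s
    ext j
    fin_cases s <;> fin_cases j <;> rfl
  have hyP' : yP 3 = fun _ => 1 := by
    ext j
    fin_cases j <;> rfl
  refine base_linear c d e hc hd ?_ ?_ ?_ ?_ ?_ ?_ ?_ ?_ ?_ ?_ ?_
  · intro i i' j h
    have m := fun s => hm s j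
    simp only [Fin.forall_fin_succ, Fin.sum_univ_succ, xM] at m
    simp at m
    fin_cases i <;> fin_cases i' <;> simp at h <;> simp <;> grind
  · intro i s
    simpa [hyP, xP, Pi.single_apply] using hpx s.castSucc i
  · intro i
    have := hpx 3 i
    simp [hyP', xP, Pi.single_apply, Fin.sum_univ_three] at this
    linear_combination this - hc i 1 0 - hc i 2 0 - hc i 2 1
  · intro s j
    simpa [hyP, xP, Pi.single_apply, hc _ j s] using hpy s.castSucc j
  · intro j
    have := hpy 3 j
    simpa [hyP', xP, Pi.single_apply, Fin.sum_univ_three] using this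
  · intro s
    simpa [hyP, xP, Pi.single_apply] using hpz s.castSucc
  · simpa [hyP', xP, Pi.single_apply, Fin.sum_univ_three] using hpz 3
  · intro i
    have := hl 0 i
    simp [yL, zL, Fin.sum_univ_three] at this
    linear_combination this - hc i 2 1
  · intro i
    have := hl 1 i
    simp [yL, zL, Fin.sum_univ_three] at this
    linear_combination this - hc i 2 0
  · intro i
    have := hl 2 i
    simp [yL, zL, Fin.sum_univ_three] at this
    linear_combination this + hc i 2 1
  · intro i
    have := hl 3 i
    simp [yL, zL, Fin.sum_univ_three] at this
    linear_combination this + hc i 2 0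

/-- The step of the induction: a trilinear form on `ℂ⁴ × ℂ³ × ℂ³` subject to the 36 conditions
contributed by one block is zero. -/
lemma block_linear (T : Fin 4 → Fin 3 → Fin 3 → ℂ)
    (hp : ∀ s k, ∑ i, ∑ j, T i j k * xP s i * yP s j = 0)
    (hl : ∀ s i, ∑ j, ∑ k, T i j k * yN s j * wL s k = 0)
    (hm : ∀ s j, ∑ i, ∑ k, T i j k * xN s i * wM s k = 0) :
    ∀ i j k, T i j k = 0 := by
  simp only [Fin.forall_fin_succ, Fin.sum_univ_succ, xP, yP, yN, wL, xN, wM, Pi.single_apply] at *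
  simp at *
  grind

/-! ### The tensor form of the theorem -/

/-- The coordinates `z` of `L ∩ M`: one base coordinate, and `a` blocks of three. -/
abbrev ZIdx (a : ℕ) : Type := Unit ⊕ Fin a × Fin 3

/-- Coordinates `(x, y, z)` of the ambient space, with `L = {x = 0}` and `M = {y = 0}`. -/
abbrev Idx (a : ℕ) : Type := Fin 4 ⊕ Fin 3 ⊕ ZIdx a

/-- The `z`-coordinates of a point with base coordinate `0` supported on the block `β`. -/
def blockVec {a : ℕ} (β : Fin a) (w : Fin 3 → ℂ) : ZIdx a → ℂ :=
  Sum.elim 0 fun q => if q.1 = β then w q.2 else 0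

/-- The `z`-coordinates of a point supported on the base coordinate. -/
def baseVec (a : ℕ) (r : ℂ) : ZIdx a → ℂ := Sum.elim (fun _ => r) 0

/-- The four general points. -/
def pPt (a : ℕ) (s : Fin 4) : Idx a → ℂ := Sum.elim (xP s) (Sum.elim (yP s) 0)

/-- The `(y, z)`-coordinates of the chosen points of `L`. -/
def lPt (a : ℕ) : Fin 4 ⊕ Fin a × Fin 3 → Fin 3 ⊕ ZIdx a → ℂ :=
  Sum.elim (fun s => Sum.elim (yL s) (baseVec a (zL s)))
    fun s => Sum.elim (yN s.2) (blockVec s.1 (wL s.2))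

/-- The `(x, z)`-coordinates of the chosen points of `M`. -/
def mPt (a : ℕ) : Fin 6 ⊕ Fin a × Fin 4 → Fin 4 ⊕ ZIdx a → ℂ :=
  Sum.elim (fun s => Sum.elim (xM s) 0)
    fun s => Sum.elim (xN s.2) (blockVec s.1 (wM s.2))

/-- The inclusion of the index set of the coordinates of `M`. -/
def inclM (a : ℕ) : Fin 4 ⊕ ZIdx a → Idx a := Sum.map id Sum.inr

/-- The point of `L = {x = 0}` with given `(y, z)`-coordinates. -/
def extL {a : ℕ} (u : Fin 3 ⊕ ZIdx a → ℂ) : Idx a → ℂ := Sum.elim 0 u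

/-- The point of `M = {y = 0}` with given `(x, z)`-coordinates. -/
def extM {a : ℕ} (u : Fin 4 ⊕ ZIdx a → ℂ) : Idx a → ℂ :=
  Sum.elim (u ∘ Sum.inl) (Sum.elim 0 (u ∘ Sum.inr))

section Tensor

variable {a : ℕ} {b : Idx a → Idx a → Idx a → ℂ}

/-- A symmetric tensor vanishing on `L` and on `M` has only the components `c`, `d`, `e` of types
`xyy`, `xxy`, `xyz`. The three sums below are its quadratic contractions in the directions `x`, `y`
and `z`. -/
lemma contractions (hs₁ : ∀ i j k, b i j k = b j i k) (hs₂ : ∀ i j k, b i j k = b i k j)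
    (hL : ∀ i j k, b (.inr i) (.inr j) (.inr k) = 0)
    (hM : ∀ i j k, b (inclM a i) (inclM a j) (inclM a k) = 0)
    {c : Fin 4 → Fin 3 → Fin 3 → ℂ} {d : Fin 4 → Fin 4 → Fin 3 → ℂ} {e : Fin 4 → Fin 3 → ZIdx a → ℂ}
    (hc : ∀ i j k, b (.inl i) (.inr (.inl j)) (.inr (.inl k)) = c i j k)
    (hd : ∀ i i' j, b (.inl i) (.inl i') (.inr (.inl j)) = d i i' j)
    (he : ∀ i j ζ, b (.inl i) (.inr (.inl j)) (.inr (.inr ζ)) = e i j ζ)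
    (x : Fin 4 → ℂ) (y : Fin 3 → ℂ) (z : ZIdx a → ℂ) {v : Idx a → ℂ}
    (hv : v = Sum.elim x (Sum.elim y z)) :
    (∀ i, ∑ j, ∑ k, b (.inl i) j k * v j * v k = ∑ j, ∑ k, c i j k * y j * y k
      + 2 * ∑ i', ∑ j, d i i' j * x i' * y j + 2 * ∑ j, ∑ ζ, e i j ζ * y j * z ζ) ∧
    (∀ j, ∑ i, ∑ k, b (.inr (.inl j)) i k * v i * v k = ∑ i, ∑ i', d i i' j * x i * x i'
      + 2 * ∑ i, ∑ k, c i j k * x i * y k + 2 * ∑ i, ∑ ζ, e i j ζ * x i * z ζ) ∧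
    (∀ ζ, ∑ i, ∑ j, b (.inr (.inr ζ)) i j * v i * v j = 2 * ∑ i, ∑ j, e i j ζ * x i * y j) := by
  -- the names record the types of the three indices
  have xxx : ∀ i j k, b (.inl i) (.inl j) (.inl k) = 0 := fun i j k => hM (.inl i) (.inl j) (.inl k)
  have xxz : ∀ i j k, b (.inl i) (.inl j) (.inr (.inr k)) = 0 := fun i j k =>
    hM (.inl i) (.inl j) (.inr k)
  have xzz : ∀ i j k, b (.inl i) (.inr (.inr j)) (.inr (.inr k)) = 0 := fun i j k =>
    hM (.inl i) (.inr j) (.inr k)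
  have xzx : ∀ i j k, b (.inl i) (.inr (.inr j)) (.inl k) = 0 := fun i j k =>
    hM (.inl i) (.inr j) (.inl k)
  have zxx : ∀ i j k, b (.inr (.inr i)) (.inl j) (.inl k) = 0 := fun i j k =>
    hM (.inr i) (.inl j) (.inl k)
  have zxz : ∀ i j k, b (.inr (.inr i)) (.inl j) (.inr (.inr k)) = 0 := fun i j k =>
    hM (.inr i) (.inl j) (.inr k)
  have zzx : ∀ i j k, b (.inr (.inr i)) (.inr (.inr j)) (.inl k) = 0 := fun i j k =>
    hM (.inr i) (.inr j) (.inl k)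
  have xyx : ∀ i j k, b (.inl i) (.inr (.inl j)) (.inl k) = d i k j := fun i j k => by
    rw [hs₂, hd]
  have yxx : ∀ i j k, b (.inr (.inl j)) (.inl i) (.inl k) = d i k j := fun i j k => by
    rw [hs₁, hs₂, hd]
  have yxy : ∀ i j k, b (.inr (.inl j)) (.inl i) (.inr (.inl k)) = c i j k := fun i j k => by
    rw [hs₁, hc]
  have yyx : ∀ i j k, b (.inr (.inl j)) (.inr (.inl k)) (.inl i) = c i j k := fun i j k => by
    rw [hs₂, hs₁, hc]
  have xzy : ∀ i j k, b (.inl i) (.inr (.inr k)) (.inr (.inl j)) = e i j k := fun i j k => by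
    rw [hs₂, he]
  have yxz : ∀ i j k, b (.inr (.inl j)) (.inl i) (.inr (.inr k)) = e i j k := fun i j k => by
    rw [hs₁, he]
  have yzx : ∀ i j k, b (.inr (.inl j)) (.inr (.inr k)) (.inl i) = e i j k := fun i j k => by
    rw [hs₂, hs₁, he]
  have zxy : ∀ i j k, b (.inr (.inr k)) (.inl i) (.inr (.inl j)) = e i j k := fun i j k => by
    rw [hs₁, hs₂, he]
  have zyx : ∀ i j k, b (.inr (.inr k)) (.inr (.inl j)) (.inl i) = e i j k := fun i j k => by
    rw [hs₂, hs₁, hs₂, he]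
  refine ⟨fun i => ?_, fun j => ?_, fun ζ => ?_⟩
  · have h1 : ∑ j, ∑ i', d i i' j * y j * x i' = ∑ i', ∑ j, d i i' j * x i' * y j := by
      rw [Finset.sum_comm]
      simp only [mul_right_comm]
    have h2 : ∑ ζ, ∑ j, e i j ζ * z ζ * y j = ∑ j, ∑ ζ, e i j ζ * y j * z ζ := by
      rw [Finset.sum_comm]
      simp only [mul_right_comm]
    simp only [Fintype.sum_sum_type (α₁ := Fin 4), Fintype.sum_sum_type (α₁ := Fin 3), hv,
      Sum.elim_inl, Sum.elim_inr, Finset.sum_add_distrib, xxx, xxz, xzx, xzz, xyx, xzy, hc, hd, he,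
      zero_mul, Finset.sum_const_zero, h1, h2]
    ring
  · have h1 : ∑ k, ∑ i, c i j k * y k * x i = ∑ i, ∑ k, c i j k * x i * y k := by
      rw [Finset.sum_comm]
      simp only [mul_right_comm]
    have h2 : ∑ ζ, ∑ i, e i j ζ * z ζ * x i = ∑ i, ∑ ζ, e i j ζ * x i * z ζ := by
      rw [Finset.sum_comm]
      simp only [mul_right_comm]
    simp only [Fintype.sum_sum_type (α₁ := Fin 4), Fintype.sum_sum_type (α₁ := Fin 3), hv,
      Sum.elim_inl, Sum.elim_inr, Finset.sum_add_distrib, yxx, yxy, yyx, yxz, yzx, hL, zero_mul,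
      Finset.sum_const_zero, h1, h2]
    ring
  · have h1 : ∑ j, ∑ i, e i j ζ * y j * x i = ∑ i, ∑ j, e i j ζ * x i * y j := by
      rw [Finset.sum_comm]
      simp only [mul_right_comm]
    simp only [Fintype.sum_sum_type (α₁ := Fin 4), Fintype.sum_sum_type (α₁ := Fin 3), hv,
      Sum.elim_inl, Sum.elim_inr, Finset.sum_add_distrib, zxx, zxz, zzx, zxy, zyx, hL, zero_mul,
      Finset.sum_const_zero, h1]
    ring

lemma sum_baseVec (g : ZIdx a → ℂ) (r : ℂ) : ∑ ζ, g ζ * baseVec a r ζ = g (.inl ()) * r := by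
  simp [baseVec]

lemma sum_blockVec (g : ZIdx a → ℂ) (β : Fin a) (w : Fin 3 → ℂ) :
    ∑ ζ, g ζ * blockVec β w ζ = ∑ k, g (.inr (β, k)) * w k := by
  simp only [blockVec, Fintype.sum_sum_type, Sum.elim_inl, Sum.elim_inr, Pi.zero_apply, mul_zero,
    Finset.sum_const_zero, zero_add, Fintype.sum_prod_type, mul_ite]
  rw [Finset.sum_eq_single β]
  · simp
  · intro β' _ h
    simp [h]
  · simp

/-- The tensor form of the theorem for the explicit configuration. -/
lemma tensor_core (hs₁ : ∀ i j k, b i j k = b j i k) (hs₂ : ∀ i j k, b i j k = b i k j)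
    (hL : ∀ i j k, b (.inr i) (.inr j) (.inr k) = 0)
    (hM : ∀ i j k, b (inclM a i) (inclM a j) (inclM a k) = 0)
    (hp : ∀ s i, ∑ j, ∑ k, b i j k * pPt a s j * pPt a s k = 0)
    (hl : ∀ s i, ∑ j, ∑ k, b i j k * extL (lPt a s) j * extL (lPt a s) k = 0)
    (hm : ∀ s i, ∑ j, ∑ k, b i j k * extM (mPt a s) j * extM (mPt a s) k = 0) :
    ∀ i j k, b i j k = 0 := by
  obtain ⟨c, hc⟩ : ∃ c : Fin 4 → Fin 3 → Fin 3 → ℂ,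
    ∀ i j k, b (.inl i) (.inr (.inl j)) (.inr (.inl k)) = c i j k := ⟨_, fun _ _ _ => rfl⟩
  obtain ⟨d, hd⟩ : ∃ d : Fin 4 → Fin 4 → Fin 3 → ℂ,
    ∀ i i' j, b (.inl i) (.inl i') (.inr (.inl j)) = d i i' j := ⟨_, fun _ _ _ => rfl⟩
  obtain ⟨e, he⟩ : ∃ e : Fin 4 → Fin 3 → ZIdx a → ℂ,
    ∀ i j ζ, b (.inl i) (.inr (.inl j)) (.inr (.inr ζ)) = e i j ζ := ⟨_, fun _ _ _ => rfl⟩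
  have con := @contractions a b hs₁ hs₂ hL hM c d e hc hd he
  have cp : ∀ s, pPt a s = Sum.elim (xP s) (Sum.elim (yP s) 0) := fun _ => rfl
  have cl0 : ∀ s, extL (lPt a (.inl s)) =
      Sum.elim (0 : Fin 4 → ℂ) (Sum.elim (yL s) (baseVec a (zL s))) := fun _ => rfl
  have cl1 : ∀ β s, extL (lPt a (.inr (β, s))) =
      Sum.elim (0 : Fin 4 → ℂ) (Sum.elim (yN s) (blockVec β (wL s))) := fun _ _ => rfl
  have cm0 : ∀ s, extM (mPt a (.inl s)) =
      Sum.elim (xM s) (Sum.elim (0 : Fin 3 → ℂ) (0 : ZIdx a → ℂ)) := fun _ => rfl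
  have cm1 : ∀ β s, extM (mPt a (.inr (β, s))) =
      Sum.elim (xN s) (Sum.elim (0 : Fin 3 → ℂ) (blockVec β (wM s))) := fun _ _ => rfl
  have px : ∀ s i, ∑ j, ∑ k, c i j k * yP s j * yP s k
      + 2 * ∑ i', ∑ j, d i i' j * xP s i' * yP s j = 0 := fun s i => by
    have := hp s (.inl i)
    rw [(con (xP s) (yP s) 0 (cp s)).1] at this
    simpa using this
  have py : ∀ s j, ∑ i, ∑ i', d i i' j * xP s i * xP s i'
      + 2 * ∑ i, ∑ k, c i j k * xP s i * yP s k = 0 := fun s j => by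
    have := hp s (.inr (.inl j))
    rw [(con (xP s) (yP s) 0 (cp s)).2.1] at this
    simpa using this
  have pz : ∀ s ζ, ∑ i, ∑ j, e i j ζ * xP s i * yP s j = 0 := fun s ζ => by
    have := hp s (.inr (.inr ζ))
    rw [(con (xP s) (yP s) 0 (cp s)).2.2] at this
    simpa using this
  have l0 : ∀ s i, ∑ j, ∑ k, c i j k * yL s j * yL s k
      + 2 * ∑ j, e i j (.inl ()) * yL s j * zL s = 0 := fun s i => by
    have := hl (.inl s) (.inl i)
    rw [(con 0 (yL s) (baseVec a (zL s)) (cl0 s)).1] at this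
    simpa [sum_baseVec, -Fintype.sum_sum_type] using this
  have l1 : ∀ β s i, ∑ j, ∑ k, c i j k * yN s j * yN s k
      + 2 * ∑ j, ∑ k, e i j (.inr (β, k)) * yN s j * wL s k = 0 := fun β s i => by
    have := hl (.inr (β, s)) (.inl i)
    rw [(con 0 (yN s) (blockVec β (wL s)) (cl1 β s)).1] at this
    simpa [sum_blockVec, -Fintype.sum_sum_type] using this
  have m0 : ∀ s j, ∑ i, ∑ i', d i i' j * xM s i * xM s i' = 0 := fun s j => by
    have := hm (.inl s) (.inr (.inl j))
    rw [(con (xM s) 0 0 (cm0 s)).2.1] at this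
    simpa using this
  have m1 : ∀ β s j, ∑ i, ∑ i', d i i' j * xN s i * xN s i'
      + 2 * ∑ i, ∑ k, e i j (.inr (β, k)) * xN s i * wM s k = 0 := fun β s j => by
    have := hm (.inr (β, s)) (.inr (.inl j))
    rw [(con (xN s) 0 (blockVec β (wM s)) (cm1 β s)).2.1] at this
    simpa [sum_blockVec, -Fintype.sum_sum_type] using this
  obtain ⟨c0, d0, e0⟩ := base_conditions c d (fun i j => e i j (.inl ()))
    (fun _ _ _ => by rw [← hc, ← hc, hs₂]) (fun _ _ _ => by rw [← hd, ← hd, hs₁]) px py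
    (fun s => pz s _) l0 m0
  have e1 : ∀ β i j k, e i j (.inr (β, k)) = 0 := fun β =>
    block_linear (fun i j k => e i j (.inr (β, k))) (fun s k => pz s _)
      (fun s i => by simpa [c0] using l1 β s i) (fun s j => by simpa [d0] using m1 β s j)
  have e2 : ∀ i j ζ, e i j ζ = 0 := by
    rintro i j (⟨⟩ | ⟨β, k⟩)
    · exact e0 i j
    · exact e1 β i j k
  have hx : ∀ i j k, b (.inl i) j k = 0 := by
    rintro i (j | j | j) (k | k | k)
    · exact hM (.inl i) (.inl j) (.inl k)
    · exact (hd i j k).trans (d0 i j k)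
    · exact hM (.inl i) (.inl j) (.inr k)
    · rw [hs₂]
      exact (hd i k j).trans (d0 i k j)
    · exact (hc i j k).trans (c0 i j k)
    · exact (he i j k).trans (e2 i j k)
    · exact hM (.inl i) (.inr j) (.inl k)
    · rw [hs₂]
      exact (he i k j).trans (e2 i k j)
    · exact hM (.inl i) (.inr j) (.inr k)
  rintro (i | i) (j | j) (k | k)
  · exact hx i _ _
  · exact hx i _ _
  · exact hx i _ _
  · exact hx i _ _
  · rw [hs₁]
    exact hx j _ _
  · rw [hs₁]
    exact hx j _ _
  · rw [hs₂, hs₁]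
    exact hx k _ _
  · exact hL i j k

end Tensor

/-! ### From tensors to generic configurations -/

/-- Only the zero cubic is singular at the points of the configuration and vanishes on `{x = 0}` and
`{y = 0}`; the equivalence `e` names the coordinates of the ambient space. -/
lemma singSpace_eq_zero {n a : ℕ} (e : Fin (n + 1) ≃ Idx a) {S V : Set (Fin (n + 1) → ℂ)}
    (hVL : ∀ u : Fin 3 ⊕ ZIdx a → ℂ, extL u ∘ e ∈ V)
    (hVM : ∀ u : Fin 4 ⊕ ZIdx a → ℂ, extM u ∘ e ∈ V) (hSp : ∀ s, pPt a s ∘ e ∈ S)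
    (hSl : ∀ s, extL (lPt a s) ∘ e ∈ S) (hSm : ∀ s, extM (mPt a s) ∘ e ∈ S) :
    ∀ f ∈ SingSpace n 3 S V, f = 0 := by
  intro f hf
  obtain ⟨hd, hV, hS⟩ := mem_singSpace.1 hf
  have hsum : ∀ w : Idx a → ℂ, w ∘ e ∈ S → ∀ i, ∑ j, ∑ k,
      tensor f (e.symm i) (e.symm j) (e.symm k) * w j * w k = 0 := by
    intro w hw i
    have := tensor_sum hd (w ∘ e) (e.symm i)
    rw [hS _ hw, mul_zero] at this
    rw [← this, ← e.symm.sum_comp]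
    refine Finset.sum_congr rfl fun j _ => ?_
    rw [← e.symm.sum_comp]
    simp
  have hzL : ∀ v : Fin (n + 1) → ℂ, (∀ j ∈ {j | ∃ i, e j = .inl i}, v j = 0) → eval v f = 0 := by
    intro v hv
    have : v = extL (fun c => v (e.symm (.inr c))) ∘ e := by
      ext j
      rcases hj : e j with i | c
      · simpa [extL, hj] using hv j ⟨i, hj⟩
      · simp [extL, hj, e.symm_apply_eq.2 hj.symm]
    rw [this]
    exact hV _ (hVL _)
  have hzM : ∀ v : Fin (n + 1) → ℂ, (∀ j ∈ {j | ∃ i, e j = .inr (.inl i)}, v j = 0) →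
      eval v f = 0 := by
    intro v hv
    have : v = extM (fun c => v (e.symm (inclM a c))) ∘ e := by
      ext j
      rcases hj : e j with i | i | c
      · simp [extM, inclM, hj, e.symm_apply_eq.2 hj.symm]
      · simpa [extM, hj] using hv j ⟨i, hj⟩
      · simp [extM, inclM, hj, e.symm_apply_eq.2 hj.symm]
    rw [this]
    exact hV _ (hVM _)
  have key := tensor_core (b := fun i j k => tensor f (e.symm i) (e.symm j) (e.symm k))
    (fun _ _ _ => tensor_swap_left _ _ _ _) (fun _ _ _ => tensor_swap_right _ _ _ _)
    (fun _ _ _ => tensor_eq_zero_of_vanish hzL (by simp) (by simp) (by simp))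
    (fun i j k => by
      have hnot : ∀ c, e.symm (inclM a c) ∉ {j | ∃ i, e j = .inr (.inl i)} := by
        rintro (c | c) <;> simp [inclM]
      exact tensor_eq_zero_of_vanish hzM (hnot i) (hnot j) (hnot k))
    (fun s => hsum _ (hSp s)) (fun s => hsum _ (hSl s)) (fun s => hsum _ (hSm s))
  exact eq_zero_of_tensor hd fun i j k => by simpa using key (e i) (e j) (e k)

/-- Multiplication by the 0-1 matrix of an inclusion `ρ` of index sets extends vectors by zero. -/
lemma incl_mulVec {I J K κ : Type*} [Fintype J] [DecidableEq K] (e : I → K) (q : J ≃ κ)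
    {ρ : κ → K} (hρ : Function.Injective ρ) {u : κ → ℂ} {v : K → ℂ} (hv : ∀ c, v (ρ c) = u c)
    (hv0 : ∀ k, (∀ c, k ≠ ρ c) → v k = 0) :
    (Matrix.of fun i j => if e i = ρ (q j) then (1 : ℂ) else 0).mulVec (u ∘ q) = v ∘ e := by
  ext i
  simp only [Matrix.mulVec, dotProduct, Matrix.of_apply, ite_mul, one_mul, zero_mul,
    Function.comp_apply]
  by_cases h : ∃ c, e i = ρ c
  · obtain ⟨c, hc⟩ := h
    rw [Finset.sum_eq_single (q.symm c)]
    · simp [hc, hv]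
    · intro j _ hj
      refine if_neg fun h => hj ?_
      rw [hρ (hc.symm.trans h), q.symm_apply_apply]
    · simp
  · push Not at h
    rw [hv0 _ h]
    exact Finset.sum_eq_zero fun j _ => if_neg (h _)

lemma incl_mulVec_injective {I J K κ : Type*} [Fintype J] [DecidableEq K] (e : I ≃ K)
    (q : J ≃ κ) {ρ : κ → K} (hρ : Function.Injective ρ) :
    Function.Injective
      (Matrix.of fun i j => if e i = ρ (q j) then (1 : ℂ) else 0).mulVec := by
  have key : ∀ (w : J → ℂ) (j : J),
      (Matrix.of fun i j => if e i = ρ (q j) then (1 : ℂ) else 0).mulVec w (e.symm (ρ (q j))) =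
        w j := by
    intro w j
    simp only [Matrix.mulVec, dotProduct, Matrix.of_apply, Equiv.apply_symm_apply]
    rw [Finset.sum_eq_single j]
    · simp
    · intro j' _ h
      simp [hρ.eq_iff, h.symm]
    · simp
  intro w w' h
  ext j
  rw [← key w j, ← key w' j, h]

theorem cubics_codim_43 (n : ℕ) (hn : 7 ≤ n) (h3 : n % 3 = 1) :
    Generic
      (ι := (Fin (n + 1) × Fin (n - 3)) ⊕ (Fin (n + 1) × Fin (n - 2)) ⊕
        (Fin (n - 3) × Fin (n - 3)) ⊕ (Fin ((4 * n - 10) / 3) × Fin (n - 2)) ⊕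
        (Fin 4 × Fin (n + 1))) fun t =>
      let AL : Matrix (Fin (n + 1)) (Fin (n - 3)) ℂ := Matrix.of fun i j => t (Sum.inl (i, j))
      let AM : Matrix (Fin (n + 1)) (Fin (n - 2)) ℂ :=
        Matrix.of fun i j => t (Sum.inr (Sum.inl (i, j)))
      let l : Fin (n - 3) → Fin (n + 1) → ℂ :=
        fun s => AL.mulVec fun j => t (Sum.inr (Sum.inr (Sum.inl (s, j))))
      let m : Fin ((4 * n - 10) / 3) → Fin (n + 1) → ℂ :=
        fun s => AM.mulVec fun j => t (Sum.inr (Sum.inr (Sum.inr (Sum.inl (s, j)))))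
      let p : Fin 4 → Fin (n + 1) → ℂ :=
        fun k i => t (Sum.inr (Sum.inr (Sum.inr (Sum.inr (k, i)))))
      let U : Set (Fin (n + 1) → ℂ) := Set.range AL.mulVec ∪ Set.range AM.mulVec
      let S : Set (Fin (n + 1) → ℂ) := Set.range l ∪ Set.range m ∪ Set.range p
      Function.Injective AL.mulVec ∧ Function.Injective AM.mulVec ∧
      ∀ f ∈ SingSpace n 3 S U, f = 0 := by

  obtain ⟨a, rfl⟩ : ∃ a, n = 7 + 3 * a := ⟨(n - 7) / 3, by omega⟩
  let e : Fin (7 + 3 * a + 1) ≃ Idx a := Fintype.equivOfCardEq (by simp; omega)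
  let eL : Fin (7 + 3 * a - 3) ≃ Fin 3 ⊕ ZIdx a := Fintype.equivOfCardEq (by simp; omega)
  let eM : Fin (7 + 3 * a - 2) ≃ Fin 4 ⊕ ZIdx a := Fintype.equivOfCardEq (by simp; omega)
  let el : Fin (7 + 3 * a - 3) ≃ Fin 4 ⊕ Fin a × Fin 3 := Fintype.equivOfCardEq (by simp; omega)
  let em : Fin ((4 * (7 + 3 * a) - 10) / 3) ≃ Fin 6 ⊕ Fin a × Fin 4 :=
    Fintype.equivOfCardEq (by simp; omega)
  -- the parameters of the explicit configuration
  let t₀ : (Fin (7 + 3 * a + 1) × Fin (7 + 3 * a - 3)) ⊕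
      (Fin (7 + 3 * a + 1) × Fin (7 + 3 * a - 2)) ⊕
      (Fin (7 + 3 * a - 3) × Fin (7 + 3 * a - 3)) ⊕
      (Fin ((4 * (7 + 3 * a) - 10) / 3) × Fin (7 + 3 * a - 2)) ⊕
      (Fin 4 × Fin (7 + 3 * a + 1)) → ℂ :=
    Sum.elim (fun r => if e r.1 = .inr (eL r.2) then 1 else 0) <|
    Sum.elim (fun r => if e r.1 = inclM a (eM r.2) then 1 else 0) <|
    Sum.elim (fun r => lPt a (el r.1) (eL r.2)) <|
    Sum.elim (fun r => mPt a (em r.1) (eM r.2)) fun r => pPt a r.1 (e r.2)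
  have hρM : Function.Injective (inclM a) :=
    Function.injective_id.sumMap Sum.inr_injective
  have hL : ∀ u : Fin 3 ⊕ ZIdx a → ℂ,
      (Matrix.of fun i j => t₀ (.inl (i, j))).mulVec (u ∘ eL) = extL u ∘ e := fun u =>
    incl_mulVec e eL Sum.inr_injective (fun _ => rfl) (by
      rintro (k | k) hk
      · rfl
      · exact absurd rfl (hk k))
  have hM : ∀ u : Fin 4 ⊕ ZIdx a → ℂ,
      (Matrix.of fun i j => t₀ (.inr (.inl (i, j)))).mulVec (u ∘ eM) = extM u ∘ e := fun u =>
    incl_mulVec e eM hρM (by rintro (c | c) <;> rfl) (by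
      rintro (k | k | k) hk
      · exact absurd rfl (hk (.inl k))
      · rfl
      · exact absurd rfl (hk (.inr k)))
  have g1 := generic_mulVec_injective (fun i j => Sum.inl (i, j)) t₀
    (incl_mulVec_injective e eL Sum.inr_injective)
  have g2 := generic_mulVec_injective (fun i j => Sum.inr (Sum.inl (i, j))) t₀
    (incl_mulVec_injective e eM hρM)
  -- the points of `L` and of `M` at which the cubics vanish are indexed by their coordinates `w`
  have g3 := generic_singSpace (d := 3)
    (S := Sum.elim (Sum.elim
      (fun s i => ∑ j, X (.inl (i, j)) * X (.inr (.inr (.inl (s, j)))))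
      (fun s i => ∑ j, X (.inr (.inl (i, j))) * X (.inr (.inr (.inr (.inl (s, j)))))))
      fun s i => X (.inr (.inr (.inr (.inr (s, i))))))
    (V := Sum.elim
      (fun (w : Fin (7 + 3 * a - 3) → ℂ) i => ∑ j, X (.inl (i, j)) * C (w j))
      (fun (w : Fin (7 + 3 * a - 2) → ℂ) i => ∑ j, X (.inr (.inl (i, j))) * C (w j))) t₀ (by
    refine singSpace_eq_zero e ?_ ?_ ?_ ?_ ?_
    · intro u
      refine ⟨.inl (u ∘ eL), ?_⟩
      rw [← hL]
      ext i
      simp [Matrix.mulVec, dotProduct]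
    · intro u
      refine ⟨.inr (u ∘ eM), ?_⟩
      rw [← hM]
      ext i
      simp [Matrix.mulVec, dotProduct]
    · intro s
      refine ⟨.inr s, ?_⟩
      ext i
      simp [t₀]
    · intro s
      refine ⟨.inl (.inl (el.symm s)), ?_⟩
      rw [← hL]
      ext i
      simp [Matrix.mulVec, dotProduct, t₀]
    · intro s
      refine ⟨.inl (.inr (em.symm s)), ?_⟩
      rw [← hM]
      ext i
      simp [Matrix.mulVec, dotProduct, t₀])
  refine (g1.and (g2.and g3)).mono ?_
  rintro t ⟨h1, h2, h3⟩
  refine ⟨h1, h2, fun f hf => h3 f ?_⟩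
  rw [mem_singSpace] at hf ⊢
  obtain ⟨hd, hV, hS⟩ := hf
  refine ⟨hd, ?_, ?_⟩
  · rintro _ ⟨w | w, rfl⟩
    · refine hV _ (.inl ⟨w, ?_⟩)
      ext i
      simp [Matrix.mulVec, dotProduct]
    · refine hV _ (.inr ⟨w, ?_⟩)
      ext i
      simp [Matrix.mulVec, dotProduct]
  · rintro _ ⟨(s | s) | s, rfl⟩
    · refine hS _ (.inl (.inl ⟨s, ?_⟩))
      ext i
      simp [Matrix.mulVec, dotProduct]
    · refine hS _ (.inl (.inr ⟨s, ?_⟩))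
      ext i
      simp [Matrix.mulVec, dotProduct]
    · refine hS _ (.inr ⟨s, ?_⟩)
      ext i
      simp
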